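/- Let N₁ : ℝ → ℝ satisfy N₁(G) ≥ 2 for all large G and ∫₂^{N₁(G)} (−P(t)) dt = a·G + O(1) as G → ∞. Let g : ℝ → ℝ satisfy (i) g(T) − T ∼ (1−c)·T/ln T as T → ∞, (ii) for every fixed l > 0, ∫_{g(T)}^{g(T+2l)} |ζ(1/2+it)|² dt = (1+o(1))·2l·ln T as T → ∞, and (iii) ∫_T^{g(T)} |ζ(1/2+it)|² dt ∼ (1−c)·T as T → ∞. Then the following asymptotic factorization formula holds: ∫_T^{g(T)} |ζ(1/2+it)|² dt ∼ [∫_{N₁(T)}^{N₁(g(T))} (−P(t)) dt] · [∫_{g(T)}^{g(T+1/a)} |ζ(1/2+it)|² dt] as T → ∞. -/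

import Mathlib

/-!
Write `F G = ∫_2^{N₁ G} (-P)`, so that `F G = a G + O(1)`. Then
`∫_{N₁ T}^{N₁ (g T)} (-P) = F (g T) - F T = a (g T - T) + O(1)`, and since `g T - T → ∞` the bounded
error is negligible: the first factor is `∼ a (1 - c) T / log T`. Property (ii) with `2 l = 1 / a`
makes the second factor `∼ log T / a`. The logarithms cancel in the product, which is therefore
`∼ (1 - c) T`, the size of the left-hand side by (iii).
-/

open Filter Real Asymptotics MeasureTheory

noncomputable def pichar (t : ℝ) : ℝ := (Nat.primeCounting ⌊t⌋₊ : ℝ)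

noncomputable def P (t : ℝ) : ℝ := pichar t - ∫ u in (2:ℝ)..t, 1 / Real.log u

noncomputable def a : ℝ := Real.exp 4.5

noncomputable def c : ℝ := Real.eulerMascheroniConstant

noncomputable def Z (t : ℝ) : ℝ := ‖riemannZeta (1/2 + (t : ℂ) * Complex.I)‖ ^ 2

lemma isEquivalent_sub_of_sub_mul_isBigO_one {α 𝕜 : Type*} [NormedField 𝕜] {l : Filter α}
    {m : Filter 𝕜} {F : 𝕜 → 𝕜} {A : 𝕜} {u v : α → 𝕜} (hA : A ≠ 0)
    (hF : (fun x => F x - A * x) =O[m] (fun _ => (1 : 𝕜)))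
    (hu : Tendsto u l m) (hv : Tendsto v l m)
    (huv : (fun _ => (1 : 𝕜)) =o[l] (fun x => v x - u x)) :
    (fun x => F (v x) - F (u x)) ~[l] (fun x => A * (v x - u x)) := by
  have hFu : (fun x => F (u x) - A * u x) =O[l] (fun _ => (1 : 𝕜)) := hF.comp_tendsto hu
  have hFv : (fun x => F (v x) - A * v x) =O[l] (fun _ => (1 : 𝕜)) := hF.comp_tendsto hv
  have herror : (fun x => (F (v x) - A * v x) - (F (u x) - A * u x)) =o[l]
      (fun x => A * (v x - u x)) :=
    (hFv.sub hFu).trans_isLittleO (huv.const_mul_right hA)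
  refine IsLittleO.isEquivalent (herror.congr_left fun x => ?_)
  simp only [Pi.sub_apply]
  ring

lemma isLittleO_one_self_div_log_atTop :
    (fun _ => (1 : ℝ)) =o[atTop] (fun x : ℝ => x / Real.log x) := by
  refine (isLittleO_log_id_atTop.mul_isBigO
    (isBigO_refl (fun x : ℝ => (Real.log x)⁻¹) atTop)).congr' ?_ (Eventually.of_forall fun x => ?_)
  · filter_upwards [eventually_gt_atTop 1] with x hx
    exact mul_inv_cancel₀ (Real.log_pos hx).ne'
  · simp only [id_eq, div_eq_mul_inv]

lemma isLittleO_self_div_log_self_atTop : (fun x : ℝ => x / Real.log x) =o[atTop] (fun x => x) := by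
  simpa only [mul_one, div_eq_mul_inv] using
    (isBigO_refl (fun x : ℝ => x) atTop).mul_isLittleO inv_log_isLittleO_one

lemma monotone_pichar : Monotone pichar := fun _ _ hst =>
  Nat.cast_le.2 (Nat.monotone_primeCounting (Nat.floor_le_floor hst))

lemma continuousOn_one_div_log : ContinuousOn (fun u => 1 / Real.log u) (Set.Ioi 1) := by
  simpa only [one_div] using differentiableOn_inv_log.continuousOn

lemma continuousOn_integral_one_div_log {b : ℝ} (hb : 1 < b) :
    ContinuousOn (fun t => ∫ u in b..t, 1 / Real.log u) (Set.Ioi 1) := by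
  intro t ht
  have hint : IntervalIntegrable (fun u => 1 / Real.log u) volume b t :=
    (continuousOn_one_div_log.mono (Set.ordConnected_Ioi.uIcc_subset hb ht)).intervalIntegrable
  exact (intervalIntegral.integral_hasDerivAt_right hint
    (continuousOn_one_div_log.stronglyMeasurableAtFilter isOpen_Ioi t ht)
    (continuousOn_one_div_log.continuousAt (Ioi_mem_nhds ht))).continuousAt.continuousWithinAt

lemma intervalIntegrable_P {x y : ℝ} (hx : 1 < x) (hy : 1 < y) :
    IntervalIntegrable P volume x y :=
  monotone_pichar.intervalIntegrable.sub
    ((continuousOn_integral_one_div_log one_lt_two).mono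
      (Set.ordConnected_Ioi.uIcc_subset hx hy)).intervalIntegrable

theorem stmt_14_general {A κ b : ℝ} (hA : A ≠ 0) (hκ : κ ≠ 0) {p z N g : ℝ → ℝ}
    (hp : ∀ᶠ G in atTop, IntervalIntegrable p volume b (N G))
    (hN : (fun G => (∫ t in b..N G, p t) - A * G) =O[atTop] (fun _ => (1 : ℝ)))
    (hgap : (fun T => g T - T) ~[atTop] (fun T => κ * T / Real.log T))
    (hwindow : (fun T => ∫ t in g T..g (T + 1 / A), z t) ~[atTop]
      (fun T => 1 / A * Real.log T))
    (htotal : (fun T => ∫ t in T..g T, z t) ~[atTop] (fun T => κ * T)) :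
    (fun T => ∫ t in T..g T, z t) ~[atTop]
      (fun T => (∫ t in N T..N (g T), p t) * ∫ t in g T..g (T + 1 / A), z t) := by
  simp only [mul_div_assoc] at hgap
  have hg_equiv : g ~[atTop] (fun T => T) := IsLittleO.isEquivalent
    (hgap.trans_isLittleO (isLittleO_self_div_log_self_atTop.const_mul_left κ))
  have hg : Tendsto g atTop atTop := hg_equiv.symm.tendsto_atTop tendsto_id
  have hlarge : (fun _ => (1 : ℝ)) =o[atTop] (fun T => g T - T) :=
    (isLittleO_one_self_div_log_atTop.const_mul_right hκ).trans_isEquivalent hgap.symm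
  have hfactor : (fun T => ∫ t in N T..N (g T), p t) ~[atTop]
      (fun T => A * (κ * (T / Real.log T))) := by
    refine ((isEquivalent_sub_of_sub_mul_isBigO_one hA hN tendsto_id hg hlarge).congr_left ?_).trans
      (IsEquivalent.refl.mul hgap)
    filter_upwards [hp, hg.eventually hp] with T hT hgT
    exact intervalIntegral.integral_interval_sub_left hgT hT
  refine htotal.trans ((hfactor.mul hwindow).congr_right ?_).symm
  filter_upwards [eventually_gt_atTop 1] with T hT
  have hlog : Real.log T ≠ 0 := (Real.log_pos hT).ne'
  simp only [Pi.mul_apply]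
  field_simp

/-- Theorem 7: asymptotic factorization formula
`∫_T^{g T} |ζ|² ∼ [∫_{N₁ T}^{N₁(g T)} (-P)] · [∫_{g T}^{g(T+1/a)} |ζ|²]`. -/
theorem stmt_14 (N₁ : ℝ → ℝ)
    (hN2 : ∀ᶠ G in atTop, 2 ≤ N₁ G)
    (hN : (fun G => (∫ t in (2:ℝ)..N₁ G, -P t) - a * G) =O[atTop] (fun _ => (1:ℝ)))
    (g : ℝ → ℝ)
    (hg1 : (fun T => g T - T) ~[atTop] (fun T => (1 - c) * T / Real.log T))
    (hg2 : ∀ l : ℝ, 0 < l →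
      (fun T => ∫ t in g T..g (T + 2 * l), Z t) ~[atTop] (fun T => 2 * l * Real.log T))
    (hg3 : (fun T => ∫ t in T..g T, Z t) ~[atTop] (fun T => (1 - c) * T)) :
    (fun T => ∫ t in T..g T, Z t) ~[atTop]
      (fun T => (∫ t in N₁ T..N₁ (g T), -P t) * ∫ t in g T..g (T + 1 / a), Z t) := by
  have ha : 0 < a := Real.exp_pos _
  have hc : 1 - c ≠ 0 := by
    unfold c
    linarith [Real.eulerMascheroniConstant_lt_two_thirds]
  have hwindow := hg2 (1 / (2 * a)) (by positivity)
  rw [show 2 * (1 / (2 * a)) = 1 / a by field_simp] at hwindow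
  exact stmt_14_general ha.ne' hc
    (hN2.mono fun _ hG => (intervalIntegrable_P one_lt_two (one_lt_two.trans_le hG)).neg)
    hN hg1 hwindow hg3
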